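/- The two-variable quaternionic Mahler measures of the commutator polynomials satisfy: m_ℍ(xy − yx) = 0, and m_ℍ(xy − yx + 1) = (1/4)·(1 − √5 + 3·log((3 + √5)/2)). -/

import Mathlib

open MeasureTheory Quaternion

noncomputable instance : MeasurableSpace (Quaternion ℝ) := borel _
instance : BorelSpace (Quaternion ℝ) := ⟨rfl⟩
instance : Nonempty (Metric.sphere (0 : Quaternion ℝ) 1) := ⟨⟨1, by simp⟩⟩

/-- The probability Haar measure `μ` on the group `T¹(ℍ)` of unit quaternions
(the Haar measure normalized so that the whole group has measure `1`). -/
noncomputable def muH : Measure (Metric.sphere (0 : Quaternion ℝ) 1) :=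
  Measure.haarMeasure ⊤

/-- The quaternionic Mahler measure `m_ℍ(f) = ∫_{T¹(ℍ)} log |f(q)| dμ(q)`. -/
noncomputable def mahlerH (f : Quaternion ℝ → Quaternion ℝ) : ℝ :=
  ∫ q : Metric.sphere (0 : Quaternion ℝ) 1, Real.log ‖f q‖ ∂muH
/-- The two-variable quaternionic Mahler measure
`m_ℍ(f) = ∫_{T¹(ℍ)×T¹(ℍ)} log |f(x,y)| d(μ⊗μ)(x,y)`. -/
noncomputable def mahlerH2 (f : Quaternion ℝ → Quaternion ℝ → Quaternion ℝ) : ℝ :=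
  ∫ p : (Metric.sphere (0 : Quaternion ℝ) 1) × (Metric.sphere (0 : Quaternion ℝ) 1),
    Real.log ‖f p.1 p.2‖ ∂(muH.prod muH)


open Set in
theorem lintegral_comp_norm_sq (f : ℝ → ENNReal) (hf : Measurable f) :
    ∫⁻ w : ℂ, f (‖w‖ ^ 2) = ENNReal.ofReal Real.pi * ∫⁻ t in Ioi (0 : ℝ), f t := by
  have himage : (fun r : ℝ => r ^ 2) '' Ioi 0 = Ioi 0 := by
    ext t
    constructor
    · rintro ⟨r, hr, rfl⟩
      exact pow_pos (mem_Ioi.1 hr) 2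
    · intro ht
      exact ⟨√t, Real.sqrt_pos.2 ht, Real.sq_sqrt (le_of_lt ht)⟩
  have hsub : ∫⁻ t in Ioi (0 : ℝ), f t
      = 2 * ∫⁻ r in Ioi (0 : ℝ), ENNReal.ofReal r * f (r ^ 2) := by
    rw [← himage, lintegral_image_eq_lintegral_abs_deriv_mul measurableSet_Ioi
      (f' := fun r => 2 * r), himage, ← lintegral_const_mul _ (by fun_prop)]
    · refine setLIntegral_congr_fun measurableSet_Ioi fun r hr => ?_
      have hr : 0 < r := hr
      rw [abs_of_pos (by positivity), ENNReal.ofReal_mul (by norm_num), ← mul_assoc]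
      simp
    · intro r _
      simpa using (hasDerivAt_pow 2 r).hasDerivWithinAt
    · intro a ha b hb h
      exact (sq_eq_sq₀ (le_of_lt ha) (le_of_lt hb)).1 h
  rw [← Complex.lintegral_comp_polarCoord_symm, hsub]
  simp_rw [Complex.norm_polarCoord_symm, sq_abs, smul_eq_mul]
  have htarget : polarCoord.target = Ioi (0 : ℝ) ×ˢ Ioo (-Real.pi) Real.pi := rfl
  rw [htarget, Measure.volume_eq_prod, ← Measure.prod_restrict,
    lintegral_prod _ (by fun_prop)]
  have hinner : ∀ r ∈ Ioi (0 : ℝ), ∫⁻ θ in Ioo (-Real.pi) Real.pi,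
      ENNReal.ofReal (r, θ).1 * f ((r, θ).1 ^ 2)
      = ENNReal.ofReal (2 * Real.pi) * (ENNReal.ofReal r * f (r ^ 2)) := by
    intro r hr
    simp only [lintegral_const, Measure.restrict_apply_univ, Real.volume_Ioo]
    rw [mul_comm]
    congr 2
    ring
  rw [setLIntegral_congr_fun measurableSet_Ioi hinner, lintegral_const_mul _ (by fun_prop),
    ENNReal.ofReal_mul (by norm_num)]
  simp
  ring

/-- The cone over the set of unit vectors of `ℂ × ℂ` whose first coordinate lies in `B`. -/
def coneOver (B : Set ℂ) : Set (ℂ × ℂ) :=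
  {p | ‖p.1‖ ^ 2 + ‖p.2‖ ^ 2 ∈ Set.Ioo (0 : ℝ) 1 ∧
    (√(‖p.1‖ ^ 2 + ‖p.2‖ ^ 2))⁻¹ • p.1 ∈ B}

theorem measurableSet_coneOver {B : Set ℂ} (hB : MeasurableSet B) :
    MeasurableSet (coneOver B) := by
  refine MeasurableSet.inter ?_ ?_
  · exact measurableSet_Ioo.preimage (by fun_prop)
  · exact hB.preimage (by fun_prop)

open Set in
theorem volume_scaled_inter_ball (B : Set ℂ) {s : ℝ} (hs : 0 < s) :
    volume {z : ℂ | ‖z‖ ^ 2 < s ∧ (√s)⁻¹ • z ∈ B}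
      = ENNReal.ofReal s * volume (B ∩ Metric.ball 0 1) := by
  have hs' : 0 < √s := Real.sqrt_pos.2 hs
  have : {z : ℂ | ‖z‖ ^ 2 < s ∧ (√s)⁻¹ • z ∈ B}
      = (fun z => (√s)⁻¹ • z) ⁻¹' (B ∩ Metric.ball 0 1) := by
    ext z
    simp only [mem_ofPred_eq, mem_preimage, mem_inter_iff, mem_ball_zero_iff, norm_smul, norm_inv,
      Real.norm_eq_abs, abs_of_pos hs']
    rw [and_comm, inv_mul_lt_iff₀ hs', mul_one, Real.lt_sqrt (norm_nonneg z)]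
  rw [this, Measure.addHaar_preimage_smul _ (inv_ne_zero hs'.ne')]
  simp [Complex.finrank_real_complex, Real.sq_sqrt hs.le, abs_of_pos hs]

open Set in
theorem volume_coneOver {B : Set ℂ} (hB : MeasurableSet B) :
    volume (coneOver B) = ENNReal.ofReal (Real.pi / 2) * volume (B ∩ Metric.ball 0 1) := by
  set S : Set (ℂ × ℝ) := {p | ‖p.1‖ ^ 2 < p.2 ∧ p.2 < 1 ∧ (√p.2)⁻¹ • p.1 ∈ B} with hSdef
  have hS : MeasurableSet S := by
    have h1 : MeasurableSet {p : ℂ × ℝ | ‖p.1‖ ^ 2 < p.2} :=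
      measurableSet_lt (by fun_prop) (by fun_prop)
    have h2 : MeasurableSet {p : ℂ × ℝ | p.2 < 1} := measurableSet_lt (by fun_prop) (by fun_prop)
    have h3 : Measurable fun p : ℂ × ℝ => (√p.2)⁻¹ • p.1 := by fun_prop
    exact h1.inter (h2.inter (h3 hB))
  have hfiber : ∀ z : ℂ, volume (Prod.mk z ⁻¹' coneOver B)
      = ENNReal.ofReal Real.pi * volume (Prod.mk z ⁻¹' S) := by
    intro z
    set D : Set ℝ := {t | ‖z‖ ^ 2 + t ∈ Ioo (0 : ℝ) 1 ∧ (√(‖z‖ ^ 2 + t))⁻¹ • z ∈ B} with hDdef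
    have hD : MeasurableSet D := by
      refine MeasurableSet.inter ?_ ?_
      · exact measurableSet_Ioo.preimage (by fun_prop)
      · exact hB.preimage (by fun_prop)
    have h1 : volume (Prod.mk z ⁻¹' coneOver B) = ∫⁻ w : ℂ, D.indicator 1 (‖w‖ ^ 2) := by
      rw [← lintegral_indicator_one ((measurableSet_coneOver hB).preimage (by fun_prop))]
      rfl
    rw [h1, lintegral_comp_norm_sq _ (measurable_one.indicator hD), lintegral_indicator_one hD,
      Measure.restrict_apply hD]
    congr 1
    rw [← measure_preimage_add volume (‖z‖ ^ 2) (Prod.mk z ⁻¹' S)]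
    congr 1
    ext t
    simp only [hDdef, hSdef, mem_inter_iff, mem_ofPred_eq, mem_Ioo, mem_Ioi, mem_preimage]
    have := sq_nonneg ‖z‖
    constructor
    · rintro ⟨⟨⟨_, h2⟩, h3⟩, h4⟩
      exact ⟨by linarith, h2, h3⟩
    · rintro ⟨h1, h2, h3⟩
      exact ⟨⟨⟨by linarith, h2⟩, h3⟩, by linarith⟩
  have hslice : ∀ s : ℝ, volume ((fun z => (z, s)) ⁻¹' S)
      = (Ioo (0 : ℝ) 1).indicator
          (fun s => ENNReal.ofReal s * volume (B ∩ Metric.ball 0 1)) s := by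
    intro s
    by_cases hs : s ∈ Ioo (0 : ℝ) 1
    · rw [indicator_of_mem hs, ← volume_scaled_inter_ball B hs.1]
      congr 1
      ext z
      simp [hSdef, hs.2]
    · rw [indicator_of_notMem hs]
      convert measure_empty (μ := volume)
      ext z
      simp only [hSdef, mem_preimage, mem_ofPred_eq, mem_empty_iff_false, iff_false]
      rintro ⟨h1, h2, _⟩
      exact hs ⟨(sq_nonneg _).trans_lt h1, h2⟩
  have hhalf : ∫⁻ s in Ioo (0 : ℝ) 1, ENNReal.ofReal s = ENNReal.ofReal (1 / 2) := by
    rw [← ofReal_integral_eq_lintegral_ofReal]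
    · rw [← integral_Ioc_eq_integral_Ioo, ← intervalIntegral.integral_of_le zero_le_one,
        integral_id]
      norm_num
    · exact (continuous_id.integrableOn_Icc).mono_set Ioo_subset_Icc_self
    · exact (ae_restrict_mem measurableSet_Ioo).mono fun s hs => hs.1.le
  rw [Measure.volume_eq_prod, Measure.prod_apply (measurableSet_coneOver hB)]
  simp_rw [hfiber]
  rw [lintegral_const_mul _ (measurable_measure_prodMk_left hS), ← Measure.prod_apply hS,
    Measure.prod_apply_symm hS]
  simp_rw [hslice]
  rw [lintegral_indicator measurableSet_Ioo, lintegral_mul_const _ (by fun_prop), hhalf,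
    ← mul_assoc, ← ENNReal.ofReal_mul Real.pi_pos.le]
  congr 2
  ring

open scoped Pointwise in
instance : (volume : Measure ℍ[ℝ]).toSphere.IsMulLeftInvariant where
  map_mul_left_eq_self g := by
    ext A hA
    have hg : (g : ℍ[ℝ]) ≠ 0 := ne_zero_of_mem_unit_sphere g
    have hgn : ‖(g : ℍ[ℝ])‖ = 1 := norm_eq_of_mem_sphere g
    let L : ℍ[ℝ] ≃ₗᵢ[ℝ] ℍ[ℝ] :=
      { LinearEquiv.ofBijective (LinearMap.mulLeft ℝ (g : ℍ[ℝ])) (mulLeft_bijective₀ _ hg) with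
        norm_map' := fun q => by
          change ‖(g : ℍ[ℝ]) * q‖ = ‖q‖
          rw [norm_mul, hgn, one_mul] }
    have hL : ∀ q, L q = g * q := fun _ => rfl
    have hmeas : Measurable fun y : Metric.sphere (0 : ℍ[ℝ]) 1 => g * y :=
      (continuous_const_mul g).measurable
    rw [Measure.map_apply hmeas hA, Measure.toSphere_apply' _ hA,
      Measure.toSphere_apply' _ (hmeas hA),
      ← L.measurePreserving.measure_preimage_equiv (f := L.toMeasurableEquiv)
        (Set.Ioo (0 : ℝ) 1 • (Subtype.val '' A))]
    congr 2
    ext q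
    simp only [Set.mem_preimage, Set.mem_smul, Set.mem_image,
      LinearIsometryEquiv.coe_toMeasurableEquiv]
    constructor
    · rintro ⟨r, hr, _, ⟨y, hy, rfl⟩, rfl⟩
      exact ⟨r, hr, _, ⟨g * y, hy, rfl⟩, by rw [hL, mul_smul_comm]; rfl⟩
    · rintro ⟨r, hr, _, ⟨y, hy, rfl⟩, h⟩
      refine ⟨r, hr, _, ⟨g⁻¹ * y, by simpa using hy, rfl⟩, L.injective ?_⟩
      rw [← h, hL, mul_smul_comm]
      congr 1
      simp [mul_inv_cancel_left₀ hg]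

theorem toSphere_eq_smul_muH :
    (volume : Measure ℍ[ℝ]).toSphere = (volume : Measure ℍ[ℝ]).toSphere Set.univ • muH :=
  Measure.haarMeasure_unique _ ⊤

instance : IsProbabilityMeasure muH :=
  ⟨Measure.haarMeasure_self (K₀ := (⊤ : TopologicalSpace.PositiveCompacts _))⟩

open scoped Pointwise in
theorem cone_preimage_fst (T : ℍ[ℝ] ≃ₗᵢ[ℝ] WithLp 2 (ℂ × ℂ)) (B : Set ℂ) :
    Set.Ioo (0 : ℝ) 1 • (((↑) : Metric.sphere (0 : ℍ[ℝ]) 1 → ℍ[ℝ]) '' ((fun y => (T y).fst) ⁻¹' B))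
      = (WithLp.ofLp ∘ T) ⁻¹' coneOver B := by
  have hnorm : ∀ q, ‖(T q).fst‖ ^ 2 + ‖(T q).snd‖ ^ 2 = ‖q‖ ^ 2 := fun q => by
    rw [← T.norm_map q, WithLp.prod_norm_sq_eq_of_L2]
  ext q
  have hmem : WithLp.ofLp (T q) ∈ coneOver B
      ↔ ‖q‖ ^ 2 ∈ Set.Ioo (0 : ℝ) 1 ∧ ‖q‖⁻¹ • (T q).fst ∈ B := by
    change ‖(T q).fst‖ ^ 2 + ‖(T q).snd‖ ^ 2 ∈ Set.Ioo (0 : ℝ) 1 ∧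
      (√(‖(T q).fst‖ ^ 2 + ‖(T q).snd‖ ^ 2))⁻¹ • (T q).fst ∈ B ↔ _
    rw [hnorm, Real.sqrt_sq (norm_nonneg q)]
  rw [Set.mem_preimage, Function.comp_apply, hmem]
  simp only [Set.mem_smul, Set.mem_image]
  constructor
  · rintro ⟨r, ⟨hr0, hr1⟩, _, ⟨y, hy, rfl⟩, rfl⟩
    have hrn : ‖r • (y : ℍ[ℝ])‖ = r := by
      rw [norm_smul, norm_eq_of_mem_sphere y, mul_one, Real.norm_of_nonneg hr0.le]
    rw [hrn, map_smul, WithLp.smul_fst, inv_smul_smul₀ hr0.ne']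
    exact ⟨⟨by positivity, by nlinarith⟩, hy⟩
  · rintro ⟨⟨h0, h1⟩, hB⟩
    have hq : 0 < ‖q‖ := (norm_nonneg q).lt_of_ne fun h => by simp [← h] at h0
    refine ⟨‖q‖, ⟨hq, by nlinarith⟩, ‖q‖⁻¹ • q, ⟨⟨‖q‖⁻¹ • q, ?_⟩, ?_, rfl⟩, ?_⟩
    · simp [norm_smul, hq.ne']
    · simpa using hB
    · rw [smul_inv_smul₀ hq.ne']

theorem toSphere_preimage_fst (T : ℍ[ℝ] ≃ₗᵢ[ℝ] WithLp 2 (ℂ × ℂ)) {B : Set ℂ}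
    (hB : MeasurableSet B) :
    (volume : Measure ℍ[ℝ]).toSphere ((fun y => (T y).fst) ⁻¹' B)
      = ENNReal.ofReal (2 * Real.pi) * volume (B ∩ Metric.ball 0 1) := by
  have hcont : Continuous fun y : Metric.sphere (0 : ℍ[ℝ]) 1 => (T y).fst :=
    (WithLp.prod_continuous_ofLp 2 ℂ ℂ).fst.comp (T.continuous.comp continuous_subtype_val)
  rw [Measure.toSphere_apply' _ (hcont.measurable hB), cone_preimage_fst,
    ((WithLp.volume_preserving_ofLp ℂ ℂ).comp T.measurePreserving).measure_preimage
      (measurableSet_coneOver hB).nullMeasurableSet, volume_coneOver hB, Quaternion.finrank_eq_four,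
    ← mul_assoc, show ((4 : ℕ) : ENNReal) = ENNReal.ofReal 4 by simp,
    ← ENNReal.ofReal_mul (by norm_num)]
  congr 2
  ring

/-- The orthogonal projection of the unit sphere to a plane is uniformly distributed on the
unit disc. -/
theorem map_fst_muH (T : ℍ[ℝ] ≃ₗᵢ[ℝ] WithLp 2 (ℂ × ℂ)) :
    muH.map (fun y : Metric.sphere (0 : ℍ[ℝ]) 1 => (T y).fst)
      = (ENNReal.ofReal Real.pi)⁻¹ • (volume : Measure ℂ).restrict (Metric.ball 0 1) := by
  have hcont : Continuous fun y : Metric.sphere (0 : ℍ[ℝ]) 1 => (T y).fst :=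
    (WithLp.prod_continuous_ofLp 2 ℂ ℂ).fst.comp (T.continuous.comp continuous_subtype_val)
  ext B hB
  have huniv := toSphere_preimage_fst T MeasurableSet.univ
  have hpre := toSphere_preimage_fst T hB
  rw [toSphere_eq_smul_muH] at hpre
  simp only [Set.preimage_univ, Set.univ_inter, Complex.volume_ball] at huniv
  rw [Measure.smul_apply, huniv] at hpre
  rw [Measure.map_apply hcont.measurable hB, Measure.smul_apply, Measure.restrict_apply hB]
  have hpi : ENNReal.ofReal Real.pi ≠ 0 := by simp [Real.pi_pos]
  have h2pi : ENNReal.ofReal (2 * Real.pi) ≠ 0 := by simp [Real.pi_pos]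
  have hpi' : ENNReal.ofReal Real.pi ≠ ⊤ := ENNReal.ofReal_ne_top
  have h2pi' : ENNReal.ofReal (2 * Real.pi) ≠ ⊤ := ENNReal.ofReal_ne_top
  rw [smul_eq_mul, mul_assoc, ENNReal.mul_right_inj h2pi h2pi'] at hpre
  rw [smul_eq_mul, ← hpre, ENNReal.ofReal_one, one_pow, one_mul, ← ENNReal.ofReal_coe_nnreal,
    NNReal.coe_real_pi, ← mul_assoc, ENNReal.inv_mul_cancel hpi hpi', one_mul]

theorem Quaternion.norm_sq_eq (q : ℍ[ℝ]) :
    ‖q‖ ^ 2 = q.re ^ 2 + q.imI ^ 2 + q.imJ ^ 2 + q.imK ^ 2 := by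
  rw [sq, ← Quaternion.normSq_eq_norm_mul_self, Quaternion.normSq_def']

theorem exists_plane_isometry (x : ℍ[ℝ]) (hx : ‖x‖ = 1) :
    ∃ T : ℍ[ℝ] ≃ₗᵢ[ℝ] WithLp 2 (ℂ × ℂ), (∀ y, (T y).fst.re = y.re) ∧
      ∀ y : ℍ[ℝ], ‖y‖ = 1 →
        ‖x * y - y * x‖ ^ 2 = 4 * (1 - x.re ^ 2) * (1 - ‖(T y).fst‖ ^ 2) := by
  obtain ⟨s, u, hu, hu0, hxu⟩ : ∃ (s : ℝ) (u : ℍ[ℝ]), ‖u‖ = 1 ∧ u.re = 0 ∧ x.im = s • u := by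
    by_cases h : x.im = 0
    · refine ⟨0, ((Complex.I : ℂ) : ℍ[ℝ]), ?_, by simp, by simp [h]⟩
      rw [← sq_eq_sq₀ (norm_nonneg _) zero_le_one, Quaternion.norm_sq_eq]
      simp
    · have hn : ‖x.im‖ ≠ 0 := norm_ne_zero_iff.2 h
      exact ⟨‖x.im‖, ‖x.im‖⁻¹ • x.im, by simp [norm_smul, hn], by simp,
        (smul_inv_smul₀ hn _).symm⟩
  let v : Fin 2 ⊕ Fin 2 → ℍ[ℝ] := Sum.elim ![1, u] ![0, 0]
  have hv : Orthonormal ℝ ((Set.range Sum.inl).domRestrict v) := by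
    constructor
    · rintro ⟨_, i, rfl⟩
      fin_cases i
      · simp [v]
      · simpa [v] using hu
    · rintro ⟨_, i, rfl⟩ ⟨_, j, rfl⟩ hij
      fin_cases i <;> fin_cases j <;> simp [v, Quaternion.inner_def, hu0] at hij ⊢
  obtain ⟨b, hb⟩ := hv.exists_orthonormalBasis_extension_of_card_eq
    (by rw [Quaternion.finrank_eq_four]; rfl)
  have hb0 : b (Sum.inl 0) = 1 := hb _ ⟨0, rfl⟩
  have hb1 : b (Sum.inl 1) = u := hb _ ⟨1, rfl⟩
  let T := b.equiv (Complex.orthonormalBasisOneI.prod Complex.orthonormalBasisOneI)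
    (Equiv.refl (Fin 2 ⊕ Fin 2))
  have hT : ∀ y, (T y).fst = (inner ℝ 1 y : ℝ) + (inner ℝ u y : ℝ) * Complex.I := by
    intro y
    simp [T, OrthonormalBasis.equiv_apply, b.repr_apply_apply, hb0, hb1]
  have hre : ∀ y : ℍ[ℝ], inner ℝ 1 y = y.re := fun y => by
    simp [Quaternion.inner_def]
  refine ⟨T, fun y => by simp [hT, hre], fun y hy => ?_⟩
  have hnorm : ‖(T y).fst‖ ^ 2 = y.re ^ 2 + (inner ℝ u y) ^ 2 := by
    rw [hT, hre, ← Complex.normSq_eq_norm_sq, Complex.normSq_add_mul_I]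
  have hI : x.imI = s * u.imI := by simpa using congrArg QuaternionAlgebra.imI hxu
  have hJ : x.imJ = s * u.imJ := by simpa using congrArg QuaternionAlgebra.imJ hxu
  have hK : x.imK = s * u.imK := by simpa using congrArg QuaternionAlgebra.imK hxu
  have hx1 := Quaternion.norm_sq_eq x
  have hu1 := Quaternion.norm_sq_eq u
  have hy1 := Quaternion.norm_sq_eq y
  rw [hx, hI, hJ, hK] at hx1
  rw [hu, hu0] at hu1
  rw [hy] at hy1
  rw [hnorm, Quaternion.norm_sq_eq]
  simp only [Quaternion.inner_def, Quaternion.re_mul, Quaternion.re_star, Quaternion.imI_star,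
    Quaternion.imJ_star, Quaternion.imK_star, Quaternion.re_sub, Quaternion.imI_sub,
    Quaternion.imJ_sub, Quaternion.imK_sub, Quaternion.imI_mul, Quaternion.imJ_mul,
    Quaternion.imK_mul, hI, hJ, hK, hu0]
  have hs : 1 - x.re ^ 2 = s ^ 2 := by linear_combination hx1 - s ^ 2 * hu1
  rw [hs]
  linear_combination -4 * s ^ 2 * ((y.imI ^ 2 + y.imJ ^ 2 + y.imK ^ 2) * hu1 + hy1)

theorem norm_commutator_add_one_sq (x y : ℍ[ℝ]) :
    ‖x * y - y * x + 1‖ ^ 2 = 1 + ‖x * y - y * x‖ ^ 2 := by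
  rw [Quaternion.norm_sq_eq, Quaternion.norm_sq_eq]
  simp
  ring

theorem map_norm_sq_volume_ball :
    ((volume : Measure ℂ).restrict (Metric.ball 0 1)).map (fun z => ‖z‖ ^ 2)
      = ENNReal.ofReal Real.pi • (volume : Measure ℝ).restrict (Set.Ioo 0 1) := by
  have hmeas : Measurable fun z : ℂ => ‖z‖ ^ 2 := by fun_prop
  ext A hA
  rw [Measure.map_apply hmeas hA, Measure.restrict_apply (hmeas hA), Measure.smul_apply,
    Measure.restrict_apply hA]
  have hA' : MeasurableSet (A ∩ Set.Iio 1) := hA.inter measurableSet_Iio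
  have hball : (fun z : ℂ => ‖z‖ ^ 2) ⁻¹' A ∩ Metric.ball 0 1
      = (fun z : ℂ => ‖z‖ ^ 2) ⁻¹' (A ∩ Set.Iio 1) := by
    ext z
    simp
  rw [hball, ← lintegral_indicator_one (hmeas hA')]
  have := lintegral_comp_norm_sq _ (measurable_one.indicator hA')
  rw [lintegral_indicator_one hA', Measure.restrict_apply hA'] at this
  refine this.trans ?_
  rw [Set.inter_assoc, Set.inter_comm (Set.Iio 1), Set.Ioi_inter_Iio]
  rfl

theorem integral_one_sub_norm_fst_sq (T : ℍ[ℝ] ≃ₗᵢ[ℝ] WithLp 2 (ℂ × ℂ)) {G : ℝ → ℝ}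
    (hG : Measurable G) :
    ∫ y : Metric.sphere (0 : ℍ[ℝ]) 1, G (1 - ‖(T y).fst‖ ^ 2) ∂muH = ∫ t in (0 : ℝ)..1, G t := by
  have hcont : Continuous fun y : Metric.sphere (0 : ℍ[ℝ]) 1 => (T y).fst :=
    (WithLp.prod_continuous_ofLp 2 ℂ ℂ).fst.comp (T.continuous.comp continuous_subtype_val)
  have hmeas : Measurable fun z : ℂ => ‖z‖ ^ 2 := by fun_prop
  rw [← integral_map (φ := fun y : Metric.sphere (0 : ℍ[ℝ]) 1 => (T y).fst)
    (f := fun z => G (1 - ‖z‖ ^ 2)) hcont.measurable.aemeasurable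
    (by exact (hG.comp (by fun_prop)).aestronglyMeasurable), map_fst_muH, integral_smul_measure,
    ← integral_map (φ := fun z : ℂ => ‖z‖ ^ 2) (f := fun t => G (1 - t)) hmeas.aemeasurable
    (by exact (hG.comp (by fun_prop)).aestronglyMeasurable), map_norm_sq_volume_ball,
    integral_smul_measure, ← integral_Ioc_eq_integral_Ioo,
    ← intervalIntegral.integral_of_le zero_le_one, intervalIntegral.integral_comp_sub_left,
    smul_smul, ← ENNReal.toReal_mul, ENNReal.inv_mul_cancel (by simp [Real.pi_pos])
    ENNReal.ofReal_ne_top]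
  simp

open Set in
theorem map_re_volume_ball :
    ((volume : Measure ℂ).restrict (Metric.ball 0 1)).map Complex.re
      = (((volume : Measure ℝ).restrict (Ioo 0 Real.pi)).withDensity
          fun α => ENNReal.ofReal (2 * Real.sin α ^ 2)).map Real.cos := by
  ext A hA
  have himage : Real.cos '' Ioo 0 Real.pi = Ioo (-1) 1 := by
    ext t
    constructor
    · rintro ⟨α, hα, rfl⟩
      have h1 := Real.strictAntiOn_cos ⟨le_rfl, Real.pi_pos.le⟩ ⟨hα.1.le, hα.2.le⟩ hα.1
      have h2 := Real.strictAntiOn_cos ⟨hα.1.le, hα.2.le⟩ ⟨Real.pi_pos.le, le_rfl⟩ hα.2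
      simp at h1 h2
      exact ⟨h2, h1⟩
    · intro ht
      exact ⟨Real.arccos t, ⟨Real.arccos_pos.2 ht.2, Real.arccos_lt_pi.2 ht.1⟩,
        Real.cos_arccos ht.1.le ht.2.le⟩
  have hfiber : ∀ a : ℝ, volume (Prod.mk a ⁻¹'
      (Complex.measurableEquivRealProd.symm ⁻¹' (Complex.re ⁻¹' A ∩ Metric.ball 0 1)))
      = (Ioo (-1 : ℝ) 1).indicator
        (fun a => A.indicator 1 a * ENNReal.ofReal (2 * √(1 - a ^ 2))) a := by
    intro a
    have hset : Prod.mk a ⁻¹'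
        (Complex.measurableEquivRealProd.symm ⁻¹' (Complex.re ⁻¹' A ∩ Metric.ball 0 1))
        = {b | a ∈ A ∧ b ^ 2 < 1 - a ^ 2} := by
      ext b
      have : ‖Complex.measurableEquivRealProd.symm (a, b)‖ < 1 ↔ b ^ 2 < 1 - a ^ 2 := by
        rw [← sq_lt_one_iff₀ (norm_nonneg _), ← Complex.normSq_eq_norm_sq, Complex.normSq_apply]
        simp only [Complex.measurableEquivRealProd_symm_apply]
        constructor <;> intro h <;> linarith
      simp only [mem_preimage, mem_inter_iff, mem_ball_zero_iff, this, mem_ofPred_eq]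
      rfl
    rw [hset]
    by_cases haA : a ∈ A
    · have hIoo : {b : ℝ | a ∈ A ∧ b ^ 2 < 1 - a ^ 2} = Ioo (-√(1 - a ^ 2)) (√(1 - a ^ 2)) := by
        ext b
        rw [mem_Ioo, ← abs_lt, Real.lt_sqrt (abs_nonneg b), sq_abs]
        simp [haA]
      rw [hIoo, Real.volume_Ioo, sub_neg_eq_add, ← two_mul]
      by_cases ha : a ∈ Ioo (-1 : ℝ) 1
      · simp [indicator_of_mem ha, haA]
      · have hle : 1 - a ^ 2 ≤ 0 := by
          by_contra! hlt
          exact ha (abs_lt.1 ((sq_lt_one_iff_abs_lt_one a).1 (by linarith)))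
        simp [indicator_of_notMem ha, Real.sqrt_eq_zero_of_nonpos hle]
    · simp [haA, indicator]
  rw [Measure.map_apply Complex.measurable_re hA,
    Measure.restrict_apply (Complex.measurable_re hA),
    ← Complex.volume_preserving_equiv_real_prod.symm.measure_preimage_equiv,
    Measure.volume_eq_prod, Measure.prod_apply
      (((Complex.measurable_re hA).inter measurableSet_ball).preimage
        Complex.measurableEquivRealProd.symm.measurable)]
  simp_rw [hfiber]
  rw [lintegral_indicator measurableSet_Ioo, ← himage,
    lintegral_image_eq_lintegral_abs_deriv_mul measurableSet_Ioo
      (fun α _ => (Real.hasDerivAt_cos α).hasDerivWithinAt)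
      (Real.injOn_cos.mono Ioo_subset_Icc_self),
    Measure.map_apply Real.measurable_cos hA, withDensity_apply _ (Real.measurable_cos hA),
    ← lintegral_indicator (Real.measurable_cos hA)]
  refine setLIntegral_congr_fun measurableSet_Ioo fun α hα => ?_
  have hsin := Real.sin_pos_of_mem_Ioo hα
  by_cases h : Real.cos α ∈ A
  · rw [indicator_of_mem h, indicator_of_mem (show α ∈ Real.cos ⁻¹' A from h), abs_neg,
      abs_of_pos hsin, ← Real.sin_sq, Real.sqrt_sq hsin.le, Pi.one_apply, one_mul,
      ← ENNReal.ofReal_mul hsin.le]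
    congr 1
    ring
  · rw [indicator_of_notMem h, indicator_of_notMem (show α ∉ Real.cos ⁻¹' A from h)]
    simp

theorem integral_re_muH {h : ℝ → ℝ} (hh : Measurable h) :
    ∫ x : Metric.sphere (0 : ℍ[ℝ]) 1, h (x : ℍ[ℝ]).re ∂muH
      = 2 / Real.pi * ∫ α in (0 : ℝ)..Real.pi, Real.sin α ^ 2 * h (Real.cos α) := by
  obtain ⟨T, hT, -⟩ := exists_plane_isometry 1 norm_one
  have hcont : Continuous fun y : Metric.sphere (0 : ℍ[ℝ]) 1 => (T y).fst :=
    (WithLp.prod_continuous_ofLp 2 ℂ ℂ).fst.comp (T.continuous.comp continuous_subtype_val)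
  simp_rw [← hT]
  rw [← integral_map (φ := fun y : Metric.sphere (0 : ℍ[ℝ]) 1 => (T y).fst)
    (f := fun z => h z.re) hcont.measurable.aemeasurable
    (hh.comp Complex.measurable_re).aestronglyMeasurable, map_fst_muH, integral_smul_measure,
    ← integral_map (φ := Complex.re) (f := h) Complex.measurable_re.aemeasurable
    hh.aestronglyMeasurable, map_re_volume_ball, integral_map Real.measurable_cos.aemeasurable
    hh.aestronglyMeasurable, integral_withDensity_eq_integral_toReal_smul (by fun_prop)
    (.of_forall fun _ => ENNReal.ofReal_lt_top),
    ← integral_Ioc_eq_integral_Ioo, ← intervalIntegral.integral_of_le Real.pi_pos.le,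
    div_eq_mul_inv, mul_comm 2, mul_assoc, ← intervalIntegral.integral_const_mul, smul_eq_mul,
    ENNReal.toReal_inv, ENNReal.toReal_ofReal Real.pi_pos.le]
  congr 2
  ext α
  rw [ENNReal.toReal_ofReal (by positivity), smul_eq_mul, mul_assoc]

section

open Real

theorem mul_integral_log_mul (s : ℝ) :
    s ^ 2 * ∫ t in (0 : ℝ)..1, log (4 * s ^ 2 * t) = s ^ 2 * (2 * log 2 + 2 * log s - 1) := by
  rcases eq_or_ne s 0 with rfl | hs
  · simp
  congr 1
  have hc : 4 * s ^ 2 ≠ 0 := by positivity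
  have hlog : log (4 * s ^ 2) = 2 * log 2 + 2 * log s := by
    rw [show 4 * s ^ 2 = (2 * s) ^ 2 by ring, log_pow, log_mul two_ne_zero hs]
    push_cast
    ring
  have h : ∫ t in (0 : ℝ)..1, log (4 * s ^ 2 * t)
      = ∫ t in (0 : ℝ)..1, (log (4 * s ^ 2) + log t) := by
    refine intervalIntegral.integral_congr_ae (.of_forall fun t ht => ?_)
    rw [Set.uIoc_of_le zero_le_one] at ht
    exact log_mul hc ht.1.ne'
  rw [h, intervalIntegral.integral_add intervalIntegrable_const
    intervalIntegral.intervalIntegrable_log',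
    integral_log, hlog]
  simp
  ring

theorem mul_integral_log_one_add_mul (s : ℝ) :
    s ^ 2 * ∫ t in (0 : ℝ)..1, log (1 + 4 * s ^ 2 * t)
      = ((1 + 4 * s ^ 2) * log (1 + 4 * s ^ 2) - 4 * s ^ 2) / 4 := by
  rcases eq_or_ne s 0 with rfl | hs
  · simp
  have hc : 4 * s ^ 2 ≠ 0 := by positivity
  rw [intervalIntegral.integral_comp_add_mul log hc, integral_log]
  simp
  field_simp
  ring

theorem integral_sin_sq_mul_log_sin :
    ∫ α in (0 : ℝ)..π, sin α ^ 2 * log (sin α) = -(π / 2 * log 2) + π / 4 := by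
  have hlog : IntervalIntegrable (fun α => log (sin α)) volume 0 π := intervalIntegrable_log_sin
  have hcos : IntervalIntegrable (fun α => cos α ^ 2) volume 0 π :=
    (by fun_prop : Continuous fun α => cos α ^ 2).intervalIntegrable _ _
  have hcoslog : IntervalIntegrable (fun α => cos (2 * α) * log (sin α)) volume 0 π :=
    hlog.continuousOn_mul (by fun_prop)
  have hF : ∫ α in (0 : ℝ)..π, (cos (2 * α) * log (sin α) + cos α ^ 2) = 0 := by
    rw [intervalIntegral.integral_eq_sub_of_hasDerivAt_of_le
      (f := fun α => cos α * (sin α * log (sin α)))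
      pi_pos.le]
    · simp
    · exact (continuous_cos.mul (continuous_mul_log.comp continuous_sin)).continuousOn
    · intro α hα
      have hs := (sin_pos_of_mem_Ioo hα).ne'
      refine ((hasDerivAt_cos α).mul
        ((hasDerivAt_sin α).mul ((hasDerivAt_sin α).log hs))).congr_deriv ?_
      simp only [Pi.mul_apply]
      rw [cos_two_mul']
      field_simp
      ring
    · exact hcoslog.add hcos
  rw [intervalIntegral.integral_add hcoslog hcos, integral_cos_sq] at hF
  have hsplit : ∀ α, sin α ^ 2 * log (sin α)
      = 1 / 2 * log (sin α) - 1 / 2 * (cos (2 * α) * log (sin α)) := fun α => by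
    rw [cos_two_mul', cos_sq']
    ring
  simp_rw [hsplit]
  rw [intervalIntegral.integral_sub (hlog.const_mul _) (hcoslog.const_mul _),
    intervalIntegral.integral_const_mul,
    intervalIntegral.integral_const_mul, integral_log_sin_zero_pi]
  simp at hF
  linarith

theorem integral_sub_cos_mul_log_norm {r : ℝ} (hr0 : 0 < r) (hr1 : r < 1 / 2) :
    ∫ t in (0 : ℝ)..2 * π, (3 - 2 * cos t) * log ‖1 - r * circleMap 0 1 t‖ = 2 * π * r := by
  let l : ℂ → ℂ := fun z => Complex.log (1 - r * z)
  have hderiv : ∀ z ∈ Metric.ball (0 : ℂ) 2, HasDerivAt l (-r / (1 - r * z)) z := by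
    intro z hz
    have hz' : ‖z‖ < 2 := by simpa using hz
    have hslit : 1 - r * z ∈ Complex.slitPlane := by
      left
      have := Complex.re_le_norm (r * z)
      rw [norm_mul, Complex.norm_real, norm_of_nonneg hr0.le] at this
      rw [Complex.sub_re, Complex.one_re]
      nlinarith
    simpa using (((hasDerivAt_id z).const_mul (r : ℂ)).const_sub 1).clog hslit
  have hl : DifferentiableOn ℂ l (Metric.ball 0 2) :=
    fun z hz => (hderiv z hz).differentiableAt.differentiableWithinAt
  have hd : DifferentiableOn ℂ (dslope l 0) (Metric.ball 0 2) :=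
    (Complex.differentiableOn_dslope (Metric.ball_mem_nhds _ two_pos)).2 hl
  let h : ℂ → ℂ := fun z => (3 - z) * l z - dslope l 0 z
  have hh : DifferentiableOn ℂ h (Metric.ball 0 2) := by
    refine DifferentiableOn.sub (DifferentiableOn.mul ?_ hl) hd
    fun_prop
  have hmean : circleAverage h 0 1 = h 0 := by
    refine DiffContOnCl.circleAverage (DifferentiableOn.diffContOnCl (hh.mono ?_))
    rw [abs_one, closure_ball _ one_ne_zero]
    exact Metric.closedBall_subset_ball one_lt_two
  have hh0 : h 0 = r := by
    simp [h, l, dslope_same, (hderiv 0 (by simp)).deriv]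
  have hval : ∀ t, (h (circleMap 0 1 t)).re
      = (3 - 2 * cos t) * log ‖1 - r * circleMap 0 1 t‖ := by
    intro t
    have hz : circleMap 0 1 t ≠ 0 := circleMap_ne_center one_ne_zero
    have hsum : circleMap 0 1 t + (circleMap 0 1 t)⁻¹ = (2 * cos t : ℝ) := by
      simp [circleMap, ← Complex.exp_neg, Complex.two_cos]
    have : h (circleMap 0 1 t) = ((3 - 2 * cos t : ℝ) : ℂ) * l (circleMap 0 1 t) := by
      rw [Complex.ofReal_sub, ← hsum]
      simp only [h, dslope_of_ne _ hz, slope_def_field]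
      simp [l]
      ring
    rw [this, Complex.re_ofReal_mul, Complex.log_re]
  have hcont : Continuous fun t => h (circleMap 0 1 t) := by
    refine hh.continuousOn.comp_continuous (continuous_circleMap 0 1) fun t => ?_
    simp
  rw [circleAverage_def, hh0, inv_smul_eq_iff₀ (by positivity)] at hmean
  have hre := Complex.reCLM.intervalIntegral_comp_comm
    (hcont.intervalIntegrable (μ := volume) 0 (2 * π))
  rw [hmean] at hre
  simp only [Complex.reCLM_apply, hval] at hre
  rw [hre]
  simp

theorem integral_mul_log_one_add_four_sin_sq :
    ∫ α in (0 : ℝ)..π, (1 + 4 * sin α ^ 2) * log (1 + 4 * sin α ^ 2)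
      = π * (3 * log ((3 + √5) / 2) + 3 - √5) := by
  set r : ℝ := (3 - √5) / 2 with hr
  have h5 : √5 ^ 2 = 5 := sq_sqrt (by norm_num)
  have h5' : 2 < √5 := by rw [lt_sqrt] <;> norm_num
  have h5'' : √5 < 3 := by rw [sqrt_lt] <;> norm_num
  have hr0 : 0 < r := by rw [hr]; linarith
  have hr1 : r < 1 / 2 := by rw [hr]; linarith
  have hinv : (3 + √5) / 2 = r⁻¹ := by
    refine eq_inv_of_mul_eq_one_left ?_
    rw [hr]
    linear_combination -h5 / 4
  have hr2 : 1 + r ^ 2 = 3 * r := by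
    rw [hr]
    linear_combination h5 / 4
  have hlog : ∀ t, (3 - 2 * cos t) * log (3 - 2 * cos t) = log r⁻¹ * (3 - 2 * cos t)
      + 2 * ((3 - 2 * cos t) * log ‖1 - r * circleMap 0 1 t‖) := by
    intro t
    have hpos : 0 < 3 - 2 * cos t := by linarith [cos_le_one t]
    have hn : ‖1 - r * circleMap 0 1 t‖ ^ 2 = r * (3 - 2 * cos t) := by
      rw [← Complex.normSq_eq_norm_sq, Complex.normSq_apply]
      simp [circleMap, Complex.exp_ofReal_mul_I_re, Complex.exp_ofReal_mul_I_im]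
      linear_combination r ^ 2 * sin_sq_add_cos_sq t + hr2
    have hl : 2 * log ‖1 - r * circleMap 0 1 t‖ = log r + log (3 - 2 * cos t) := by
      rw [← log_mul hr0.ne' hpos.ne', ← hn, log_pow]
      norm_num
    rw [log_inv]
    linear_combination -(3 - 2 * cos t) * hl
  have hdouble : ∀ α, 1 + 4 * sin α ^ 2 = 3 - 2 * cos (2 * α) := by
    intro α
    rw [cos_two_mul, sin_sq]
    ring
  simp_rw [hdouble]
  rw [intervalIntegral.integral_comp_mul_left
    (fun t => (3 - 2 * cos t) * log (3 - 2 * cos t)) two_ne_zero, mul_zero]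
  simp_rw [hlog]
  rw [intervalIntegral.integral_add, intervalIntegral.integral_const_mul,
    intervalIntegral.integral_const_mul,
    integral_sub_cos_mul_log_norm hr0 hr1, ← hinv]
  · rw [intervalIntegral.integral_sub (by simp) (by simp),
      intervalIntegral.integral_const_mul, integral_cos]
    simp
    rw [hr]
    ring
  · exact Continuous.intervalIntegrable (by fun_prop) _ _
  · have heq : (fun t => 2 * ((3 - 2 * cos t) * log ‖1 - r * circleMap 0 1 t‖))
        = fun t => (3 - 2 * cos t) * log (3 - 2 * cos t) - log r⁻¹ * (3 - 2 * cos t) := by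
      ext t
      rw [hlog]
      ring
    rw [heq]
    refine Continuous.intervalIntegrable (.sub (continuous_mul_log.comp ?_) ?_) _ _ <;> fun_prop

end

theorem integral_log_norm_commutator (x : Metric.sphere (0 : ℍ[ℝ]) 1) :
    ∫ y : Metric.sphere (0 : ℍ[ℝ]) 1, Real.log ‖(x : ℍ[ℝ]) * y - y * x‖ ∂muH
      = 1 / 2 * ∫ t in (0 : ℝ)..1, Real.log (4 * (1 - (x : ℍ[ℝ]).re ^ 2) * t) := by
  obtain ⟨T, -, hT⟩ := exists_plane_isometry x (norm_eq_of_mem_sphere x)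
  rw [← integral_one_sub_norm_fst_sq T
    (G := fun t => Real.log (4 * (1 - (x : ℍ[ℝ]).re ^ 2) * t)) (by fun_prop),
    ← integral_const_mul]
  congr 1
  ext y
  rw [← hT y (norm_eq_of_mem_sphere y), Real.log_pow]
  push_cast
  ring

theorem integral_log_norm_commutator_add_one (x : Metric.sphere (0 : ℍ[ℝ]) 1) :
    ∫ y : Metric.sphere (0 : ℍ[ℝ]) 1, Real.log ‖(x : ℍ[ℝ]) * y - y * x + 1‖ ∂muH
      = 1 / 2 * ∫ t in (0 : ℝ)..1, Real.log (1 + 4 * (1 - (x : ℍ[ℝ]).re ^ 2) * t) := by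
  obtain ⟨T, -, hT⟩ := exists_plane_isometry x (norm_eq_of_mem_sphere x)
  rw [← integral_one_sub_norm_fst_sq T
    (G := fun t => Real.log (1 + 4 * (1 - (x : ℍ[ℝ]).re ^ 2) * t)) (by fun_prop),
    ← integral_const_mul]
  congr 1
  ext y
  rw [← hT y (norm_eq_of_mem_sphere y), ← norm_commutator_add_one_sq, Real.log_pow]
  push_cast
  ring

theorem measurable_half_mul_integral {F : ℝ → ℝ → ℝ} (hF : Measurable F.uncurry) :
    Measurable fun a => 1 / 2 * ∫ t in (0 : ℝ)..1, F a t := by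
  simp_rw [intervalIntegral.integral_of_le zero_le_one]
  exact (hF.stronglyMeasurable.integral_prod_right).measurable.const_mul _

theorem mahlerH2_commutator : mahlerH2 (fun x y => x * y - y * x) = 0 := by
  unfold mahlerH2
  by_cases hint : Integrable (fun p : Metric.sphere (0 : ℍ[ℝ]) 1 × Metric.sphere (0 : ℍ[ℝ]) 1 =>
      Real.log ‖(p.1 : ℍ[ℝ]) * p.2 - p.2 * p.1‖) (muH.prod muH)
  swap
  · exact integral_undef hint
  rw [integral_prod _ hint]
  simp only [integral_log_norm_commutator]
  rw [integral_re_muH (measurable_half_mul_integral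
    (F := fun a t => Real.log (4 * (1 - a ^ 2) * t)) (by unfold Function.uncurry; fun_prop))]
  have hval : ∀ α, Real.sin α ^ 2
      * (1 / 2 * ∫ t in (0 : ℝ)..1, Real.log (4 * (1 - Real.cos α ^ 2) * t))
      = (Real.log 2 - 1 / 2) * Real.sin α ^ 2 + Real.sin α ^ 2 * Real.log (Real.sin α) := by
    intro α
    rw [← Real.sin_sq]
    linear_combination 1 / 2 * mul_integral_log_mul (Real.sin α)
  simp only [hval]
  rw [intervalIntegral.integral_add, intervalIntegral.integral_const_mul, integral_sin_sq,
    integral_sin_sq_mul_log_sin]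
  · simp
    ring
  · exact Continuous.intervalIntegrable (by fun_prop) _ _
  · exact intervalIntegrable_log_sin.continuousOn_mul (by fun_prop)

theorem mahlerH2_commutator_add_one :
    mahlerH2 (fun x y => x * y - y * x + 1) =
      (1 / 4) * (1 - Real.sqrt 5 + 3 * Real.log ((3 + Real.sqrt 5) / 2)) := by
  unfold mahlerH2
  have hcont : Continuous fun p : Metric.sphere (0 : ℍ[ℝ]) 1 × Metric.sphere (0 : ℍ[ℝ]) 1 =>
      Real.log ‖(p.1 : ℍ[ℝ]) * p.2 - p.2 * p.1 + 1‖ := by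
    refine Continuous.log (by fun_prop) fun p h => ?_
    have := norm_commutator_add_one_sq p.1 p.2
    rw [h] at this
    nlinarith [sq_nonneg ‖(p.1 : ℍ[ℝ]) * p.2 - p.2 * p.1‖]
  rw [integral_prod _ (hcont.integrable_of_hasCompactSupport (.of_compactSpace _))]
  simp only [integral_log_norm_commutator_add_one]
  rw [integral_re_muH (measurable_half_mul_integral
    (F := fun a t => Real.log (1 + 4 * (1 - a ^ 2) * t)) (by unfold Function.uncurry; fun_prop))]
  have hval : ∀ α, Real.sin α ^ 2
      * (1 / 2 * ∫ t in (0 : ℝ)..1, Real.log (1 + 4 * (1 - Real.cos α ^ 2) * t))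
      = 1 / 8 * ((1 + 4 * Real.sin α ^ 2) * Real.log (1 + 4 * Real.sin α ^ 2))
        - 1 / 2 * Real.sin α ^ 2 := by
    intro α
    rw [← Real.sin_sq]
    linear_combination 1 / 2 * mul_integral_log_one_add_mul (Real.sin α)
  simp only [hval]
  rw [intervalIntegral.integral_sub, intervalIntegral.integral_const_mul,
    intervalIntegral.integral_const_mul, integral_sin_sq, integral_mul_log_one_add_four_sin_sq]
  · have := Real.pi_ne_zero
    simp only [Real.sin_pi, Real.sin_zero]
    field_simp
    ring
  · refine Continuous.intervalIntegrable
      (continuous_const.mul (Real.continuous_mul_log.comp ?_)) _ _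
    fun_prop
  · exact Continuous.intervalIntegrable (by fun_prop) _ _

/-- the two-variable quaternionic Mahler measures of the commutator
polynomials `xy - yx` and `xy - yx + 1`. -/
theorem mahlerH2_commutators :
    mahlerH2 (fun x y => x * y - y * x) = 0 ∧
    mahlerH2 (fun x y => x * y - y * x + 1) =
      (1 / 4) * (1 - Real.sqrt 5 + 3 * Real.log ((3 + Real.sqrt 5) / 2)) := by
  exact ⟨mahlerH2_commutator, mahlerH2_commutator_add_one⟩
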